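/- arXiv:1901.10734 — 2 statements merged into one kernel-verified Lean document; each statement's English description precedes it below -/
import Mathlib

section
/- For a ∈ Z/q^eZ with a = b·q^{e−1}, gcd(b, q) = 1, q ≡ 1 (mod 4) prime, e odd, the eigenvalue sum Σ_{s∈Q} exp(2πi a s/q^e) equals ((b/q)·q^{e−1/2} − q^{e−1})/2, where Q is the set of squares of units of Z/q^eZ and (b/q) is the Legendre symbol. -/
/-!
Near a rational cusp `a / c`, Jacobi's theta function `θ` is asymptotic to a quadratic Gauss sum
divided by a square root. Comparing the cusps `x` and `-1 / x` through `θ(-1/τ) = √(-iτ) θ(τ)`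
gives a reciprocity law between the Gauss sums mod `2c` and mod `2a`; `a = 2` evaluates
`∑ exp(2πi x² / N)` for every `N`, including its sign.

Modulo an odd prime power `qᵉ`, squaring is two-to-one on units, so the sum over `Q` is half of the
sum of `exp(2πi b u² / q)` over all units `u`. The terms depend on `u` mod `q` only, and each class
is hit `qᵉ⁻¹` times, so what remains is the Gauss sum mod `q` without its term at `0`.
-/

open Complex Filter Finset Topology

/-! ### Characters of `ℤ/Nℤ` and reduction maps -/

@[to_additive]
theorem sum_comp_monoidHom_of_surjective {G H M : Type*} [Group G] [Fintype G] [Group H] [Fintype H]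
    [AddCommMonoid M] {φ : G →* H} (hφ : Function.Surjective φ) {k : ℕ}
    (hk : Fintype.card G = k * Fintype.card H) (f : H → M) :
    ∑ g, f (φ g) = k • ∑ h, f h := by
  classical
  have card_fiber (h : H) : #{g | φ g = h} = k := by
    have hcard : Fintype.card G = Fintype.card H * #{g | φ g = h} := by
      rw [← card_univ, card_eq_sum_card_fiberwise (f := φ) (t := univ) (by simp)]
      simp [MonoidHom.card_fiber_eq_of_mem_range φ (hφ _) (hφ h)]
    exact Nat.eq_of_mul_eq_mul_left Fintype.card_pos (hcard.symm.trans (hk.trans (mul_comm _ _)))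
  simp only [← Finset.sum_fiberwise' univ φ f, sum_const, card_fiber, Finset.smul_sum]

theorem sum_comp_zmodCastHom {M : Type*} [AddCommMonoid M] {N k m : ℕ} [NeZero N] [NeZero m]
    (hN : N = k * m) (f : ZMod m → M) :
    ∑ x : ZMod N, f (ZMod.castHom (Dvd.intro_left k hN.symm) (ZMod m) x) = k • ∑ x, f x :=
  sum_comp_addMonoidHom_of_surjective
    (φ := (ZMod.castHom (Dvd.intro_left k hN.symm) (ZMod m)).toAddMonoidHom)
    (ZMod.castHom_surjective (Dvd.intro_left k hN.symm)) (by simpa only [ZMod.card] using hN) f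

theorem stdAddChar_natCast_mul {N k m : ℕ} [NeZero N] [NeZero m] (hN : N = k * m) (x : ZMod N) :
    (ZMod.stdAddChar ((k : ZMod N) * x) : ℂ) =
      ZMod.stdAddChar (ZMod.castHom (Dvd.intro_left k hN.symm) (ZMod m) x) := by
  obtain ⟨n, rfl⟩ := ZMod.intCast_surjective x
  have hk : (k : ℂ) ≠ 0 := Nat.cast_ne_zero.mpr (left_ne_zero_of_mul (hN ▸ NeZero.ne N))
  rw [map_intCast, ZMod.stdAddChar_coe, ← Int.cast_natCast k, ← Int.cast_mul, ZMod.stdAddChar_coe]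
  congr 1
  push_cast [hN]
  field_simp

/-! ### Theta series near rational cusps -/

theorem tendsto_jacobiTheta₂_of_tendsto_im_atTop {ι : Type*} {l : Filter ι} {τ : ι → ℂ} (z : ℂ)
    (hτ : Tendsto (fun i ↦ (τ i).im) l atTop) :
    Tendsto (fun i ↦ jacobiTheta₂ z (τ i)) l (𝓝 1) := by
  rw [← tsum_ite_eq (0 : ℤ) fun _ ↦ (1 : ℂ)]
  refine tendsto_tsum_of_dominated_convergence
    (summable_pow_mul_jacobiTheta₂_term_bound |z.im| one_pos 0) (fun n ↦ ?_) ?_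
  · rcases eq_or_ne n 0 with rfl | hn
    · simpa [jacobiTheta₂_term] using tendsto_const_nhds
    · rw [if_neg hn, tendsto_zero_iff_norm_tendsto_zero]
      simp_rw [norm_jacobiTheta₂_term, sub_eq_add_neg]
      have hcoeff : -Real.pi * (n : ℝ) ^ 2 < 0 := by
        have := Real.pi_pos
        simp only [neg_mul, Left.neg_neg_iff]
        positivity
      exact Real.tendsto_exp_atBot.comp
        (tendsto_atBot_add_const_right _ _ (hτ.const_mul_atTop_of_neg hcoeff))
  · filter_upwards [hτ.eventually_ge_atTop 1] with i hi n
    simpa using norm_jacobiTheta₂_term_le one_pos le_rfl hi n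

theorem ofReal_mul_cpow {r : ℝ} (hr : 0 < r) {z : ℂ} (hz : z ≠ 0) (s : ℂ) :
    ((r : ℂ) * z) ^ s = (r : ℂ) ^ s * z ^ s := by
  have hr' : (r : ℂ) ≠ 0 := ofReal_ne_zero.mpr hr.ne'
  rw [cpow_def_of_ne_zero (mul_ne_zero hr' hz), log_ofReal_mul hr hz, ofReal_log hr.le, add_mul,
    exp_add, ← cpow_def_of_ne_zero hr', ← cpow_def_of_ne_zero hz]

/-- Euclidean division by `N`, `n ↦ (n mod N, n / N)`: the analogue for `ℤ` of
`Nat.residueClassesEquiv`. It splits sums over `ℤ` into residue classes. -/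
def intResidueClassesEquiv (N : ℕ) [NeZero N] : ℤ ≃ ZMod N × ℤ where
  toFun n := (n, n / N)
  invFun p := p.1.val + N * p.2
  left_inv n := by simp only [ZMod.val_intCast, Int.emod_add_mul_ediv]
  right_inv p := by
    have hN : (N : ℤ) ≠ 0 := Nat.cast_ne_zero.mpr (NeZero.ne N)
    have hp : ((p.1.val : ℤ)) / N = 0 :=
      Int.ediv_eq_zero_of_lt (Int.natCast_nonneg _) (by exact_mod_cast p.1.val_lt)
    ext
    · simp
    · simp only [Int.add_mul_ediv_left _ _ hN, hp, zero_add]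

/-- The theta series `∑ₙ f(n) exp(πi n² τ)` with `N`-periodic coefficients `f`, through which
`jacobiTheta` is studied near a rational cusp. -/
noncomputable def periodicTheta {N : ℕ} (f : ZMod N → ℂ) (τ : ℂ) : ℂ :=
  ∑' n : ℤ, f n * exp (Real.pi * I * n ^ 2 * τ)

theorem jacobiTheta₂_neg_inv_eq_tsum (r : ℂ) {w τ : ℂ} (hw : w ≠ 0) (hτ : τ ≠ 0) :
    jacobiTheta₂ (r / w) (-1 / (w ^ 2 * τ)) =
      (-I * (w ^ 2 * τ)) ^ (1 / 2 : ℂ) * ∑' m : ℤ, exp (Real.pi * I * (r + w * m) ^ 2 * τ) := by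
  have hroot : (-I * (w ^ 2 * τ)) ^ (1 / 2 : ℂ) ≠ 0 := by
    simp [cpow_eq_zero_iff, hw, hτ]
  have hfe := jacobiTheta₂_functional_equation (r * w * τ) (w ^ 2 * τ)
  have hz : r * w * τ / (w ^ 2 * τ) = r / w := by field_simp
  have hexp : -Real.pi * I * (r * w * τ) ^ 2 / (w ^ 2 * τ) = -(Real.pi * I * r ^ 2 * τ) := by
    field_simp
  rw [hz, hexp, exp_neg] at hfe
  have hterm (m : ℤ) : exp (Real.pi * I * (r + w * m) ^ 2 * τ) =
      exp (Real.pi * I * r ^ 2 * τ) * jacobiTheta₂_term m (r * w * τ) (w ^ 2 * τ) := by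
    rw [jacobiTheta₂_term, ← exp_add]
    ring_nf
  simp_rw [hterm, tsum_mul_left]
  rw [← jacobiTheta₂, hfe]
  field_simp [hroot]

theorem summable_periodicTheta {N : ℕ} [NeZero N] (f : ZMod N → ℂ) {τ : ℂ} (hτ : 0 < τ.im) :
    Summable fun n : ℤ ↦ f n * exp (Real.pi * I * n ^ 2 * τ) := by
  have hθ : Summable fun n : ℤ ↦ ‖exp (Real.pi * I * n ^ 2 * τ)‖ := by
    simpa [jacobiTheta₂_term] using ((summable_jacobiTheta₂_term_iff 0 τ).mpr hτ).norm
  refine .of_norm_bounded (hθ.mul_left (∑ x, ‖f x‖)) fun n ↦ ?_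
  rw [norm_mul]
  gcongr
  exact single_le_sum (fun x _ ↦ norm_nonneg (f x)) (mem_univ (n : ZMod N))

theorem tsum_eq_sum_tsum_residueClasses {E : Type*} [NormedAddCommGroup E] [CompleteSpace E]
    {g : ℤ → E} (hg : Summable g) (N : ℕ) [NeZero N] :
    ∑' n, g n = ∑ x : ZMod N, ∑' m : ℤ, g (x.val + N * m) := by
  have hprod : Summable fun p : ZMod N × ℤ ↦ g ((intResidueClassesEquiv N).symm p) :=
    (intResidueClassesEquiv N).symm.summable_iff.mpr hg
  rw [← (intResidueClassesEquiv N).symm.tsum_eq, hprod.tsum_prod, tsum_fintype]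
  rfl

theorem periodicTheta_eq_sum_jacobiTheta₂ {N : ℕ} [NeZero N] (f : ZMod N → ℂ) {τ : ℂ}
    (hτ : 0 < τ.im) :
    N * (-I * τ) ^ (1 / 2 : ℂ) * periodicTheta f τ =
      ∑ x, f x * jacobiTheta₂ (x.val / N) (-1 / (N ^ 2 * τ)) := by
  have hN : (N : ℂ) ≠ 0 := Nat.cast_ne_zero.mpr (NeZero.ne N)
  have hτ0 : τ ≠ 0 := by rintro rfl; simp at hτ
  have hroot : (-I * (N ^ 2 * τ)) ^ (1 / 2 : ℂ) = N * (-I * τ) ^ (1 / 2 : ℂ) := by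
    have := ofReal_mul_cpow (r := (N : ℝ) ^ 2) (z := -I * τ)
      (by simpa [sq_pos_iff] using NeZero.ne N) (by simp [hτ0]) (1 / 2)
    push_cast at this
    rw [mul_left_comm, this, one_div, sq_cpow_two_inv (by simpa using Nat.pos_of_neZero N)]
  rw [periodicTheta, tsum_eq_sum_tsum_residueClasses (summable_periodicTheta f hτ) N, mul_sum]
  refine sum_congr rfl fun x _ ↦ ?_
  have hcast (m : ℤ) : ((x.val + N * m : ℤ) : ZMod N) = x := by simp
  simp only [hcast, tsum_mul_left, jacobiTheta₂_neg_inv_eq_tsum _ hN hτ0, hroot]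
  push_cast
  ring

/-- The filter generated by the horoballs `{τ | C ≤ Im (-1 / τ)}` tangent to the real line at `0`:
approach to the cusp `0` of the upper half-plane. -/
noncomputable def horoballFilter : Filter ℂ := comap (fun τ ↦ (-1 / τ).im) atTop

theorem im_neg_one_div (τ : ℂ) : (-1 / τ).im = τ.im / normSq τ := by
  simp [neg_div]

theorem eventually_horoballFilter_im_pos : ∀ᶠ τ in horoballFilter, 0 < τ.im := by
  have h : ∀ᶠ τ : ℂ in horoballFilter, 0 < (-1 / τ).im := tendsto_comap.eventually_gt_atTop 0
  filter_upwards [h] with τ hτ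
  rw [im_neg_one_div] at hτ
  by_contra! hle
  exact hτ.not_ge (div_nonpos_of_nonpos_of_nonneg hle (normSq_nonneg τ))

theorem tendsto_periodicTheta_horoballFilter {N : ℕ} [NeZero N] (f : ZMod N → ℂ) :
    Tendsto (fun τ ↦ (-I * τ) ^ (1 / 2 : ℂ) * periodicTheta f τ) horoballFilter
      (𝓝 ((∑ x, f x) / N)) := by
  have hN : (N : ℂ) ≠ 0 := Nat.cast_ne_zero.mpr (NeZero.ne N)
  have him : Tendsto (fun τ : ℂ ↦ (-1 / (N ^ 2 * τ)).im) horoballFilter atTop := by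
    have hscale (τ : ℂ) : (-1 / (N ^ 2 * τ)).im = ((N : ℝ) ^ 2)⁻¹ * (-1 / τ).im := by
      rw [← im_ofReal_mul]
      push_cast
      congr 1
      field_simp
    simp_rw [hscale]
    exact tendsto_comap.const_mul_atTop (by simpa [sq_pos_iff] using NeZero.ne N)
  have hlim : Tendsto (fun τ : ℂ ↦ (∑ x, f x * jacobiTheta₂ (x.val / N) (-1 / (N ^ 2 * τ))) / N)
      horoballFilter (𝓝 ((∑ x, f x * 1) / N)) :=
    (tendsto_finsetSum _ fun x _ ↦
      (tendsto_jacobiTheta₂_of_tendsto_im_atTop _ him).const_mul (f x)).div_const _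
  simp only [mul_one] at hlim
  refine hlim.congr' ?_
  filter_upwards [eventually_horoballFilter_im_pos] with τ hτ
  rw [← periodicTheta_eq_sum_jacobiTheta₂ f hτ]
  field_simp

theorem tendsto_mul_I_horoballFilter :
    Tendsto (fun ε : ℝ ↦ (ε : ℂ) * I) (𝓝[>] 0) horoballFilter := by
  refine tendsto_comap_iff.mpr (tendsto_inv_nhdsGT_zero.congr fun ε ↦ ?_)
  simp [im_neg_one_div, normSq_apply, div_self_mul_self']

theorem tendsto_mobius_horoballFilter {x : ℝ} (hx : x ≠ 0) :
    Tendsto (fun ε : ℝ ↦ (ε : ℂ) * I / (x * (x + ε * I))) (𝓝[>] 0) horoballFilter := by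
  refine tendsto_comap_iff.mpr ((tendsto_inv_nhdsGT_zero.const_mul_atTop
    (sq_pos_of_ne_zero hx)).congr' ?_)
  filter_upwards [self_mem_nhdsWithin] with ε hε
  have hx0 : (x : ℂ) ≠ 0 := ofReal_ne_zero.mpr hx
  have hε0 : (ε : ℂ) ≠ 0 := ofReal_ne_zero.mpr (ne_of_gt hε)
  have hinv : -1 / ((ε : ℂ) * I / (x * (x + ε * I))) = ((x ^ 2 * ε⁻¹ : ℝ) : ℂ) * I + (-x : ℝ) := by
    push_cast
    field_simp
    linear_combination (-(x : ℂ)) * I_sq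
  rw [Function.comp_apply, hinv, add_im, im_ofReal_mul, I_im, ofReal_im, mul_one, add_zero]

theorem tendsto_cpow_one_half_of_sq {ι : Type*} {l : Filter ι} {f : ι → ℂ} {z : ℂ} (hz : 0 < z.re)
    (hf : Tendsto f l (𝓝 (z ^ 2))) : Tendsto (fun i ↦ f i ^ (1 / 2 : ℂ)) l (𝓝 z) := by
  have hslit : z ^ 2 ∈ slitPlane := by
    rw [mem_slitPlane_iff, sq, mul_re, mul_im]
    rcases eq_or_ne z.im 0 with him | him
    · left
      simpa [him] using hz.ne'
    · right
      have := mul_ne_zero hz.ne' him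
      contrapose! this
      linarith
  have hsqrt : (z ^ 2) ^ (1 / 2 : ℂ) = z := by rw [one_div, sq_cpow_two_inv hz]
  simpa only [hsqrt] using hf.cpow (tendsto_const_nhds (x := (1 / 2 : ℂ))) hslit

-- For `w = x + εi` one has `-1 / w = -1 / x + εi / (x * w)`, so the modular transformation carries
-- the vertical approach to the cusp `x` to an approach to the cusp `-1 / x`.
theorem jacobiTheta_neg_inv_add {x ε : ℝ} (hx : x ≠ 0) (hε : 0 < ε) :
    (-I * (ε * I / (x * (x + ε * I)))) ^ (1 / 2 : ℂ) *
        jacobiTheta (-1 / x + ε * I / (x * (x + ε * I))) =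
      (1 / (x * (x + ε * I))) ^ (1 / 2 : ℂ) * (-I * (x + ε * I)) ^ (1 / 2 : ℂ) *
        ((-I * (ε * I)) ^ (1 / 2 : ℂ) * jacobiTheta (x + ε * I)) := by
  have hx0 : (x : ℂ) ≠ 0 := ofReal_ne_zero.mpr hx
  have hw : (x + ε * I : ℂ) ≠ 0 := fun h ↦ hx (by simpa using congrArg re h)
  have hS : jacobiTheta (-(x + ε * I))⁻¹ =
      (-I * (x + ε * I)) ^ (1 / 2 : ℂ) * jacobiTheta (x + ε * I) := by
    simpa only [UpperHalfPlane.modular_S_smul] using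
      jacobiTheta_S_smul ⟨x + ε * I, by simpa using hε⟩
  have hmobius : -1 / x + ε * I / (x * (x + ε * I)) = (-(x + ε * I : ℂ))⁻¹ := by
    rw [inv_neg]
    field_simp
    ring
  have hεI : -I * (ε * I) = (ε : ℂ) := by linear_combination (-(ε : ℂ)) * I_sq
  have hbase : -I * (ε * I / (x * (x + ε * I))) = ε * (1 / (x * (x + ε * I)) : ℂ) := by
    rw [← mul_div_assoc, hεI, mul_one_div]
  rw [hmobius, hS, hbase, hεI, ofReal_mul_cpow hε (one_div_ne_zero (mul_ne_zero hx0 hw))]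
  ring

theorem jacobiTheta_cusp_limit_eq {x : ℝ} (hx : 0 < x) {A B : ℂ}
    (hA : Tendsto (fun τ ↦ (-I * τ) ^ (1 / 2 : ℂ) * jacobiTheta (x + τ)) horoballFilter (𝓝 A))
    (hB : Tendsto (fun τ ↦ (-I * τ) ^ (1 / 2 : ℂ) * jacobiTheta (-1 / x + τ)) horoballFilter
      (𝓝 B)) :
    A = (1 + I) * √(x / 2) * B := by
  have hx0 : (x : ℂ) ≠ 0 := ofReal_ne_zero.mpr hx.ne'
  have hline : Tendsto (fun ε : ℝ ↦ (x + ε * I : ℂ)) (𝓝[>] 0) (𝓝 x) :=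
    tendsto_nhdsWithin_of_tendsto_nhds (Continuous.tendsto' (by fun_prop) _ _ (by simp))
  have hsqrt : (√(x / 2) : ℂ) ^ 2 = x / 2 := by
    rw [← ofReal_pow, Real.sq_sqrt (by positivity)]
    push_cast
    rfl
  have hroot₁ : Tendsto (fun ε : ℝ ↦ (1 / (x * (x + ε * I)) : ℂ) ^ (1 / 2 : ℂ)) (𝓝[>] 0)
      (𝓝 (1 / x)) := by
    refine tendsto_cpow_one_half_of_sq (by simpa [← ofReal_inv] using hx) ?_
    rw [one_div_pow, sq]
    exact tendsto_const_nhds.div (hline.const_mul _) (mul_ne_zero hx0 hx0)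
  have hroot₂ : Tendsto (fun ε : ℝ ↦ (-I * (x + ε * I)) ^ (1 / 2 : ℂ)) (𝓝[>] 0)
      (𝓝 ((1 - I) * √(x / 2))) := by
    refine tendsto_cpow_one_half_of_sq (by simpa using hx) ?_
    have hsq : ((1 - I) * √(x / 2)) ^ 2 = -I * x := by
      rw [mul_pow, hsqrt]
      linear_combination (x / 2 : ℂ) * I_sq
    simpa only [hsq] using hline.const_mul (-I)
  have hB' := (hB.comp (tendsto_mobius_horoballFilter hx.ne')).congr' <| by
    filter_upwards [self_mem_nhdsWithin] with ε hε using jacobiTheta_neg_inv_add hx.ne' hε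
  have hBA : B = 1 / x * ((1 - I) * √(x / 2)) * A := tendsto_nhds_unique hB'
    ((hroot₁.mul hroot₂).mul (hA.comp tendsto_mul_I_horoballFilter))
  rw [hBA]
  field_simp
  linear_combination (-A * (1 - I ^ 2)) * hsqrt + A * x / 2 * I_sq

/-! ### Quadratic Gauss sums -/

theorem jacobiTheta_rat_add (a : ℤ) (c : ℕ) [NeZero c] (τ : ℂ) :
    jacobiTheta (a / c + τ) =
      periodicTheta (fun x : ZMod (2 * c) ↦ ZMod.stdAddChar ((a : ZMod (2 * c)) * x ^ 2)) τ := by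
  refine tsum_congr fun n ↦ ?_
  have hc : (c : ℂ) ≠ 0 := Nat.cast_ne_zero.mpr (NeZero.ne c)
  have hcast : (a : ZMod (2 * c)) * (n : ZMod (2 * c)) ^ 2 = ((a * n ^ 2 : ℤ) : ZMod (2 * c)) := by
    push_cast
    rfl
  beta_reduce
  rw [hcast, ZMod.stdAddChar_coe, ← exp_add]
  congr 1
  push_cast
  field_simp

theorem sum_stdAddChar_sq_reciprocity (a c : ℕ) [NeZero a] [NeZero c] :
    ∑ x : ZMod (2 * c), (ZMod.stdAddChar ((a : ZMod (2 * c)) * x ^ 2) : ℂ) =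
      (1 + I) * √(c / (2 * a)) *
        ∑ x : ZMod (2 * a), ZMod.stdAddChar (-(c : ZMod (2 * a)) * x ^ 2) := by
  have ha : (0 : ℝ) < a := Nat.cast_pos.mpr (Nat.pos_of_neZero a)
  have hc : (0 : ℝ) < c := Nat.cast_pos.mpr (Nat.pos_of_neZero c)
  have hA := tendsto_periodicTheta_horoballFilter
    fun x : ZMod (2 * c) ↦ ZMod.stdAddChar (((a : ℤ) : ZMod (2 * c)) * x ^ 2)
  have hB := tendsto_periodicTheta_horoballFilter
    fun x : ZMod (2 * a) ↦ ZMod.stdAddChar (((-c : ℤ) : ZMod (2 * a)) * x ^ 2)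
  simp only [← jacobiTheta_rat_add] at hA hB
  have hx : (-1 / ((a / c : ℝ) : ℂ)) = (-c : ℤ) / (a : ℂ) := by push_cast; field_simp
  have hcusp := jacobiTheta_cusp_limit_eq (div_pos ha hc) (by simpa using hA) (by simpa only [hx])
  simp only [Int.cast_natCast, Int.cast_neg] at hcusp
  have hsqrt : √((c : ℝ) / (2 * a)) = c / a * √(a / c / 2) := by
    have hsq : (c : ℝ) / (2 * a) = (c / a) ^ 2 * (a / c / 2) := by field_simp
    rw [hsq, Real.sqrt_mul (sq_nonneg _), Real.sqrt_sq (by positivity)]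
  have ha0 : (a : ℂ) ≠ 0 := Nat.cast_ne_zero.mpr (NeZero.ne a)
  have hc0 : (c : ℂ) ≠ 0 := Nat.cast_ne_zero.mpr (NeZero.ne c)
  rw [hsqrt]
  push_cast at hcusp ⊢
  field_simp at hcusp ⊢
  linear_combination hcusp

theorem stdAddChar_zmod_four_neg_one : (ZMod.stdAddChar (-1 : ZMod 4) : ℂ) = -I := by
  have hexp : 2 * Real.pi * I * ((-1 : ℤ) : ℂ) / ((4 : ℕ) : ℂ) = -Real.pi / 2 * I := by
    push_cast
    ring
  rw [← Int.cast_one, ← Int.cast_neg, ZMod.stdAddChar_coe, hexp, exp_neg_pi_div_two_mul_I]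

theorem sum_stdAddChar_zmod_four_neg_mul_sq (n : ℕ) :
    ∑ x : ZMod 4, (ZMod.stdAddChar (-(n : ZMod 4) * x ^ 2) : ℂ) = 2 * (1 + (-I) ^ n) := by
  have hpow (x : ZMod 4) : (ZMod.stdAddChar (-(n : ZMod 4) * x ^ 2) : ℂ) =
      ZMod.stdAddChar (-x ^ 2) ^ n := by
    rw [← AddChar.map_nsmul_eq_pow, nsmul_eq_mul, neg_mul, mul_neg]
  have hsum (f : ZMod 4 → ℂ) : ∑ x, f x = f 0 + f 1 + f 2 + f 3 := Fin.sum_univ_four f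
  have hsq : (2 : ZMod 4) ^ 2 = 0 ∧ (3 : ZMod 4) ^ 2 = 1 := by decide
  simp only [hpow]
  rw [hsum, hsq.1, hsq.2]
  simp only [zero_pow two_ne_zero, one_pow, neg_zero, AddChar.map_zero_eq_one,
    stdAddChar_zmod_four_neg_one]
  ring

theorem sum_stdAddChar_sq (N : ℕ) [NeZero N] :
    ∑ x : ZMod N, (ZMod.stdAddChar (x ^ 2) : ℂ) = (1 + I) / 2 * (1 + (-I) ^ N) * √N := by
  have hdouble : ∑ x : ZMod (2 * N), (ZMod.stdAddChar (((2 : ℕ) : ZMod (2 * N)) * x ^ 2) : ℂ) =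
      2 • ∑ x : ZMod N, (ZMod.stdAddChar (x ^ 2) : ℂ) := by
    simp only [stdAddChar_natCast_mul (N := 2 * N) (m := N) rfl, map_pow]
    exact sum_comp_zmodCastHom rfl fun x : ZMod N ↦ (ZMod.stdAddChar (x ^ 2) : ℂ)
  have hsqrt : √((N : ℝ) / (2 * (2 : ℕ))) = √N / 2 := by
    rw [Real.sqrt_div N.cast_nonneg]; norm_num
  have hrec := sum_stdAddChar_sq_reciprocity 2 N
  rw [hdouble, sum_stdAddChar_zmod_four_neg_mul_sq, hsqrt, nsmul_eq_mul] at hrec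
  push_cast at hrec
  linear_combination hrec / 2

theorem sum_stdAddChar_sq_of_odd {N : ℕ} [NeZero N] (hN : Odd N) :
    ∑ x : ZMod N, (ZMod.stdAddChar (x ^ 2) : ℂ) = (if N % 4 = 1 then 1 else I) * √N := by
  have hpow : (-I) ^ N = (-I) ^ (N % 4) :=
    pow_eq_pow_mod N (by rw [Even.neg_pow (by decide), I_pow_four])
  rw [sum_stdAddChar_sq, hpow]
  rcases Nat.odd_mod_four_iff.mp (Nat.odd_iff.mp hN) with h | h
  · rw [h, if_pos rfl]
    linear_combination (-1 / 2 * √N : ℂ) * I_sq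
  · rw [h, if_neg (by decide)]
    linear_combination ((1 - I - I ^ 2) / 2 * √N : ℂ) * I_sq

section FiniteField

variable {F : Type*} [Field F] [Fintype F] [DecidableEq F] {R : Type*} [CommRing R]

theorem sum_comp_sq_eq_sum_quadraticChar (hF : ringChar F ≠ 2) (f : F → R) :
    ∑ x, f (x ^ 2) = ∑ y, ((quadraticChar F y : R) + 1) * f y := by
  have card_sqrts (y : F) : (#{x | x ^ 2 = y} : R) = quadraticChar F y + 1 := by
    rw [← Int.cast_one, ← Int.cast_add, ← quadraticChar_card_sqrts hF y]
    simp
  simp only [← Finset.sum_fiberwise' univ (· ^ 2) f, sum_const, nsmul_eq_mul, card_sqrts]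

theorem sum_addChar_sq_eq_gaussSum [IsDomain R] (hF : ringChar F ≠ 2) {ψ : AddChar F R}
    (hψ : ψ ≠ 1) :
    ∑ x, ψ (x ^ 2) = gaussSum ((quadraticChar F).ringHomComp (Int.castRingHom R)) ψ := by
  simp [sum_comp_sq_eq_sum_quadraticChar hF, add_mul, sum_add_distrib,
    AddChar.sum_eq_zero_of_ne_one hψ, gaussSum]

theorem sum_addChar_mul_sq [IsDomain R] (hF : ringChar F ≠ 2) {ψ : AddChar F R}
    (hψ : ψ.IsPrimitive) {b : F} (hb : b ≠ 0) :
    ∑ x, ψ (b * x ^ 2) = quadraticChar F b * ∑ x, ψ (x ^ 2) := by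
  set χ := (quadraticChar F).ringHomComp (Int.castRingHom R)
  have hχ : χ⁻¹ b = quadraticChar F b := by
    rw [(quadraticChar_isQuadratic F).comp (Int.castRingHom R) |>.inv]; rfl
  have hψ' : ψ ≠ 1 := by simpa using hψ one_ne_zero
  calc ∑ x, ψ (b * x ^ 2) = gaussSum χ (ψ.mulShift b) := sum_addChar_sq_eq_gaussSum hF (hψ hb)
    _ = quadraticChar F b * ∑ x, ψ (x ^ 2) := by
      rw [sum_addChar_sq_eq_gaussSum hF hψ', ← hχ]
      exact gaussSum_mulShift_eq χ ψ (Units.mk0 b hb)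

end FiniteField

/-! ### Squares of units -/

theorem units_ne_neg {R : Type*} [Ring R] [Nontrivial R] (h2 : IsUnit (2 : R)) (u : Rˣ) :
    u ≠ -u := fun h ↦
  (h2.mul u.isUnit).ne_zero <| by rw [two_mul, add_eq_zero_iff_eq_neg, ← Units.val_neg, ← h]

section UnitSquares

variable {R : Type*} [CommRing R] [IsLocalRing R]

theorem units_sq_eq_sq_iff (h2 : IsUnit (2 : R)) {u v : Rˣ} :
    (u : R) ^ 2 = (v : R) ^ 2 ↔ u = v ∨ u = -v := by
  refine ⟨fun h ↦ ?_, by rintro (rfl | rfl) <;> simp⟩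
  have hprod : ((u : R) - v) * (u + v) = 0 := by linear_combination h
  have hsum : IsUnit (((u : R) - v) + (u + v)) := by
    simpa only [sub_add_add_cancel, ← two_mul] using h2.mul u.isUnit
  rcases IsLocalRing.isUnit_or_isUnit_of_isUnit_add hsum with hsub | hadd
  · exact .inr (Units.ext (eq_neg_of_add_eq_zero_left (hsub.mul_right_eq_zero.mp hprod)))
  · exact .inl (Units.ext (sub_eq_zero.mp (hadd.mul_left_eq_zero.mp hprod)))

theorem sum_units_sq [Fintype R] [DecidableEq R] {M : Type*} [AddCommMonoid M]
    (h2 : IsUnit (2 : R)) (f : R → M) :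
    ∑ u : Rˣ, f ((u : R) ^ 2) = 2 • ∑ x with ∃ u : Rˣ, (u : R) ^ 2 = x, f x := by
  rw [← sum_fiberwise_of_maps_to' (t := {x | ∃ u : Rˣ, (u : R) ^ 2 = x})
    (g := fun u : Rˣ ↦ (u : R) ^ 2) (by simp) f, smul_sum]
  refine sum_congr rfl fun x hx ↦ ?_
  obtain ⟨v, rfl⟩ := (mem_filter.mp hx).2
  have fiber_eq : ({u | (u : R) ^ 2 = (v : R) ^ 2} : Finset Rˣ) = {v, -v} := by
    ext u
    simp [units_sq_eq_sq_iff h2]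
  rw [sum_const, fiber_eq, card_pair (units_ne_neg h2 v)]

end UnitSquares

theorem isLocalRing_zmod_prime_pow (p : ℕ) [Fact p.Prime] {n : ℕ} (hn : n ≠ 0) :
    IsLocalRing (ZMod (p ^ n)) :=
  have : Fact (1 < p ^ n) := ⟨Nat.one_lt_pow hn (Fact.out : p.Prime).one_lt⟩
  .of_surjective' (PadicInt.toZModPow n) (ZMod.ringHom_surjective _)

theorem sum_units_comp_unitsMap_prime_pow (p : ℕ) [Fact p.Prime] {n : ℕ} (hn : n ≠ 0)
    {M : Type*} [AddCommMonoid M] (f : (ZMod p)ˣ → M) :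
    ∑ u : (ZMod (p ^ n))ˣ, f (ZMod.unitsMap (dvd_pow_self p hn) u) = p ^ (n - 1) • ∑ v, f v := by
  have hp : p.Prime := Fact.out
  refine sum_comp_monoidHom_of_surjective (ZMod.unitsMap_surjective _) ?_ f
  rw [ZMod.card_units_eq_totient, ZMod.card_units_eq_totient, Nat.totient_prime hp,
    Nat.totient_prime_pow hp (Nat.pos_of_ne_zero hn)]

theorem two_nsmul_sum_unit_squares_comp_castHom {p : ℕ} [Fact p.Prime] (hp : p ≠ 2) {n : ℕ}
    (hn : n ≠ 0) {M : Type*} [AddCommMonoid M] (f : ZMod p → M) :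
    2 • ∑ x : ZMod (p ^ n) with ∃ u : (ZMod (p ^ n))ˣ, (u : ZMod (p ^ n)) ^ 2 = x,
        f (ZMod.castHom (dvd_pow_self p hn) (ZMod p) x) =
      p ^ (n - 1) • ∑ v : (ZMod p)ˣ, f ((v : ZMod p) ^ 2) := by
  have := isLocalRing_zmod_prime_pow p hn
  have h2 : IsUnit (2 : ZMod (p ^ n)) := by
    have hcop := (Nat.coprime_primes Nat.prime_two Fact.out).mpr hp.symm
    exact_mod_cast (ZMod.isUnit_iff_coprime 2 (p ^ n)).mpr (hcop.pow_right n)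
  rw [← sum_units_sq h2 fun x ↦ f (ZMod.castHom (dvd_pow_self p hn) (ZMod p) x),
    ← sum_units_comp_unitsMap_prime_pow p hn]
  simp only [map_pow]
  rfl

theorem sum_units_eq_sum_sub {G₀ M : Type*} [GroupWithZero G₀] [Fintype G₀] [DecidableEq G₀]
    [AddCommGroup M] (f : G₀ → M) :
    ∑ u : G₀ˣ, f u = ∑ x, f x - f 0 := by
  rw [eq_sub_iff_add_eq', Fintype.sum_eq_add_sum_subtype_ne f 0, ← unitsEquivNeZero.sum_comp]
  rfl

theorem sum_units_stdAddChar_mul_sq {q : ℕ} [Fact q.Prime] (hq : q ≠ 2) {b : ℤ}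
    (hb : (b : ZMod q) ≠ 0) :
    ∑ u : (ZMod q)ˣ, (ZMod.stdAddChar ((b : ZMod q) * (u : ZMod q) ^ 2) : ℂ) =
      legendreSym q b * ((if q % 4 = 1 then 1 else I) * √q) - 1 := by
  rw [sum_units_eq_sum_sub fun x : ZMod q ↦ (ZMod.stdAddChar ((b : ZMod q) * x ^ 2) : ℂ),
    sum_addChar_mul_sq (by rwa [ZMod.ringChar_zmod_n]) (ZMod.isPrimitive_stdAddChar q) hb,
    sum_stdAddChar_sq_of_odd ((Fact.out : q.Prime).odd_of_ne_two hq)]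
  simp [legendreSym]

theorem exp_mul_val_div_eq_stdAddChar {N k m : ℕ} [NeZero N] [NeZero m] (hN : N = k * m) (b : ℤ)
    (x : ZMod N) :
    exp (2 * Real.pi * I * (b * k) * x.val / N) =
      ZMod.stdAddChar ((b : ZMod m) * ZMod.castHom (Dvd.intro_left k hN.symm) (ZMod m) x) := by
  have hk : (k : ℂ) ≠ 0 := Nat.cast_ne_zero.mpr (left_ne_zero_of_mul (hN ▸ NeZero.ne N))
  have hcast : (b : ZMod m) * ZMod.castHom (Dvd.intro_left k hN.symm) (ZMod m) x =
      ((b * x.val : ℤ) : ZMod m) := by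
    simp [ZMod.natCast_val]
  rw [hcast, ZMod.stdAddChar_coe]
  congr 1
  push_cast [hN]
  field_simp

theorem stmt_15_general (q e : ℕ) (b : ℤ) [Fact q.Prime] (hq : q ≠ 2) (he : e ≠ 0)
    (hb : IsCoprime b q) :
    ∑ s : ZMod (q ^ e) with ∃ u : (ZMod (q ^ e))ˣ, (u : ZMod (q ^ e)) ^ 2 = s,
        exp (2 * Real.pi * I * ((b * q ^ (e - 1) : ℤ) : ℂ) * (s.val : ℂ) / (q : ℂ) ^ e)
      = ((legendreSym q b : ℂ) * (q : ℂ) ^ (e - 1) * ((if q % 4 = 1 then 1 else I) * √q)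
          - (q : ℂ) ^ (e - 1)) / 2 := by
  have hqe : q ^ e = q ^ (e - 1) * q := (pow_sub_one_mul he q).symm
  have hb0 : (b : ZMod q) ≠ 0 := ((ZMod.coe_int_isUnit_iff_isCoprime b q).mpr hb.symm).ne_zero
  have hterm (s : ZMod (q ^ e)) :
      exp (2 * Real.pi * I * ((b * q ^ (e - 1) : ℤ) : ℂ) * s.val / (q : ℂ) ^ e) =
        ZMod.stdAddChar ((b : ZMod q) * ZMod.castHom (dvd_pow_self q he) (ZMod q) s) := by
    simpa using exp_mul_val_div_eq_stdAddChar hqe b s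
  have htwice := two_nsmul_sum_unit_squares_comp_castHom hq he fun y ↦
    (ZMod.stdAddChar ((b : ZMod q) * y) : ℂ)
  rw [sum_units_stdAddChar_mul_sq hq hb0, nsmul_eq_mul, nsmul_eq_mul] at htwice
  simp only [hterm]
  push_cast at htwice
  linear_combination htwice / 2

/-- For a = b·q^{e−1} with gcd(b,q) = 1, q ≡ 1 (mod 4) prime and e odd, the
eigenvalue sum Σ_{s ∈ Q} exp(2πi a s/q^e) over the set Q of squares of units of ℤ/q^eℤ
equals ((b/q)·q^{e−1/2} − q^{e−1})/2, with (b/q) the Legendre symbol. -/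
theorem stmt_15 (q e b : ℕ) [Fact q.Prime] (h4 : q % 4 = 1) (he : Odd e) (he1 : 1 ≤ e)
    (hb : Nat.Coprime b q) :
    ∑ s ∈ Finset.univ.filter
        (fun x : ZMod (q ^ e) => ∃ u : (ZMod (q ^ e))ˣ, (u : ZMod (q ^ e)) ^ 2 = x),
        Complex.exp (2 * Real.pi * Complex.I * ((b * q ^ (e - 1) : ℕ) : ℂ) * (s.val : ℂ)
          / (q : ℂ) ^ e)
      = ((legendreSym q b : ℂ) * (q : ℂ) ^ (e - 1) * (Real.sqrt q : ℂ) - (q : ℂ) ^ (e - 1)) / 2 := by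
  simpa [h4] using stmt_15_general q e b (by rintro rfl; simp at h4) (by omega)
    (Nat.isCoprime_iff_coprime.mpr hb)
end

section
/- For a d-regular graph G on n vertices, the Cheeger constant h(G) := min{e(S, V\S)/|S| : S ⊆ V, |S| ≤ n/2} satisfies h(G) ≥ (d − λ_2(G))/2. -/
/-!
The test vector equal to `|Sᶜ|` on `S` and to `-|S|` on `Sᶜ` has mean zero, so the Rayleigh
principle for the Laplacian `L` on the invariant subspace of mean-zero vectors bounds its Dirichlet
form from below by `γ` times its squared norm, where `γ` is the spectral gap of `L`. Only the edges
between `S` and `Sᶜ` contribute to the Dirichlet form, and the bound becomes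
`γ |S| |Sᶜ| ≤ n e(S, Sᶜ)` with `n = |V|`; for `|S| ≤ n / 2` the factor `|Sᶜ| / n` is at least
`1 / 2`.
In a `d`-regular graph `L = d - A`, so that `γ = d - λ₂`.
-/

section Rayleigh

variable {𝕜 E : Type*} [RCLike 𝕜] [NormedAddCommGroup E] [InnerProductSpace 𝕜 E]
  [FiniteDimensional 𝕜 E] {T : E →ₗ[𝕜] E} {γ : ℝ}

open scoped InnerProductSpace

theorem mul_norm_sq_le_re_inner_of_forall_eigenvalue_ge (hT : T.IsSymmetric)
    (hγ : ∀ μ : ℝ, Module.End.HasEigenvalue T (μ : 𝕜) → γ ≤ μ) (x : E) :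
    γ * ‖x‖ ^ 2 ≤ RCLike.re ⟪T x, x⟫_𝕜 := by
  let b := hT.eigenvectorBasis rfl
  let ev := hT.eigenvalues rfl
  have inner_map_mul (i) :
      ⟪T x, b i⟫_𝕜 * ⟪b i, x⟫_𝕜 = ((ev i * ‖⟪b i, x⟫_𝕜‖ ^ 2 : ℝ) : 𝕜) := by
    rw [hT x (b i), hT.apply_eigenvectorBasis rfl i, inner_smul_right, mul_assoc,
      ← inner_conj_symm x, RCLike.conj_mul, RCLike.ofReal_mul, RCLike.ofReal_pow]
  calc γ * ‖x‖ ^ 2 = ∑ i, γ * ‖⟪b i, x⟫_𝕜‖ ^ 2 := by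
        rw [← b.sum_sq_norm_inner_right x, Finset.mul_sum]
    _ ≤ ∑ i, ev i * ‖⟪b i, x⟫_𝕜‖ ^ 2 := by
        gcongr with i
        exact hγ _ (hT.hasEigenvalue_eigenvalues rfl i)
    _ = RCLike.re ⟪T x, x⟫_𝕜 := by
        rw [← b.sum_inner_mul_inner (T x) x, map_sum]
        exact Finset.sum_congr rfl fun i _ => by rw [inner_map_mul, RCLike.ofReal_re]

theorem mul_norm_sq_le_re_inner_of_mem_invariant (hT : T.IsSymmetric) {K : Submodule 𝕜 E}
    (hK : ∀ v ∈ K, T v ∈ K)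
    (hγ : ∀ μ : ℝ, ∀ v ∈ K, Module.End.HasEigenvector T (μ : 𝕜) v → γ ≤ μ) {x : E} (hx : x ∈ K) :
    γ * ‖x‖ ^ 2 ≤ RCLike.re ⟪T x, x⟫_𝕜 := by
  refine mul_norm_sq_le_re_inner_of_forall_eigenvalue_ge (hT.restrict_invariant hK)
    (fun μ hμ => ?_) (⟨x, hx⟩ : K)
  obtain ⟨v, hv⟩ := hμ.exists_hasEigenvector
  refine hγ μ v v.2 ⟨?_, fun h => hv.2 (Subtype.ext h)⟩
  exact Module.End.mem_eigenspace_iff.2 (congrArg Subtype.val hv.apply_eq_smul)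

end Rayleigh

open Matrix in
theorem mul_dotProduct_self_le_dotProduct_mulVec {V : Type*} [Fintype V]
    {M : Matrix V V ℝ} (hM : M.IsHermitian) {u : V → ℝ} {c γ : ℝ} (hu : M *ᵥ u = c • u)
    (hγ : ∀ (μ : ℝ) (v : V → ℝ), v ≠ 0 → u ⬝ᵥ v = 0 → M *ᵥ v = μ • v → γ ≤ μ)
    {w : V → ℝ} (hw : u ⬝ᵥ w = 0) :
    γ * (w ⬝ᵥ w) ≤ w ⬝ᵥ M *ᵥ w := by
  classical
  let K : Submodule ℝ (EuclideanSpace ℝ V) := (ℝ ∙ WithLp.toLp 2 u)ᗮ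
  have mem_K (v : EuclideanSpace ℝ V) : v ∈ K ↔ u ⬝ᵥ v.ofLp = 0 := by
    rw [Submodule.mem_orthogonal_singleton_iff_inner_left, EuclideanSpace.inner_eq_star_dotProduct,
      star_trivial]
  have hK (v : EuclideanSpace ℝ V) (hv : v ∈ K) : M.toEuclideanLin v ∈ K := by
    rw [mem_K] at hv ⊢
    rw [Matrix.ofLp_toLpLin, Matrix.toLin'_apply, dotProduct_mulVec, ← mulVec_transpose,
      ← conjTranspose_eq_transpose_of_trivial, hM, hu, smul_dotProduct, hv, smul_zero]
  have rayleigh := mul_norm_sq_le_re_inner_of_mem_invariant (isSymmetric_toEuclideanLin_iff.2 hM) hK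
    (fun μ v hvK hv => hγ μ v.ofLp (fun h => hv.2 (by ext x; exact congrFun h x))
      ((mem_K v).1 hvK) (congrArg WithLp.ofLp hv.apply_eq_smul))
    ((mem_K (WithLp.toLp 2 w)).2 hw)
  rwa [← real_inner_self_eq_norm_sq, EuclideanSpace.inner_eq_star_dotProduct,
    EuclideanSpace.inner_eq_star_dotProduct, star_trivial, star_trivial] at rayleigh

section Cut

open Finset Matrix SimpleGraph

variable {V R : Type*} (G : SimpleGraph V) [DecidableRel G.Adj]

theorem sum_sum_ite_adj_const [NonAssocSemiring R] (A B : Finset V) (c : R) :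
    ∑ x ∈ A, ∑ y ∈ B, (if G.Adj x y then c else 0) = #(G.interedges A B) * c := by
  rw [← sum_product' A B fun x y => if G.Adj x y then c else 0, ← sum_filter, sum_const,
    nsmul_eq_mul, SimpleGraph.interedges_def]

variable [Fintype V] [DecidableEq V]

theorem sum_ite_mem_const [NonAssocSemiring R] (S : Finset V) (a b : R) :
    ∑ x, (if x ∈ S then a else b) = #S * a + #Sᶜ * b := by
  rw [sum_ite, sum_const, sum_const, filter_univ_mem, filter_not, filter_univ_mem,
    ← compl_eq_univ_sdiff, nsmul_eq_mul, nsmul_eq_mul]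

theorem sum_sum_ite_adj_ite_mem_sub_sq [CommRing R] (S : Finset V) (a b : R) :
    ∑ x, ∑ y, (if G.Adj x y then
        ((if x ∈ S then a else b) - (if y ∈ S then a else b)) ^ 2 else 0) =
      2 * (#(G.interedges S Sᶜ) * (a - b) ^ 2) := by
  have const_on (A B : Finset V) {p q : R} (hA : ∀ x ∈ A, (if x ∈ S then a else b) = p)
      (hB : ∀ y ∈ B, (if y ∈ S then a else b) = q) :
      ∑ x ∈ A, ∑ y ∈ B, (if G.Adj x y then
          ((if x ∈ S then a else b) - (if y ∈ S then a else b)) ^ 2 else 0) =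
        #(G.interedges A B) * (p - q) ^ 2 := by
    rw [← sum_sum_ite_adj_const]
    exact sum_congr rfl fun x hx => sum_congr rfl fun y hy => by rw [hA x hx, hB y hy]
  have on_S : ∀ x ∈ S, (if x ∈ S then a else b) = a := fun x hx => if_pos hx
  have on_compl : ∀ x ∈ Sᶜ, (if x ∈ S then a else b) = b := fun x hx => if_neg (mem_compl.1 hx)
  have card_comm : #(G.interedges Sᶜ S) = #(G.interedges S Sᶜ) :=
    have := G.symm
    Rel.card_interedges_comm Sᶜ S
  simp only [← sum_add_sum_compl S, sum_add_distrib]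
  rw [const_on S S on_S on_S, const_on S Sᶜ on_S on_compl, const_on Sᶜ S on_compl on_S,
    const_on Sᶜ Sᶜ on_compl on_compl, card_comm]
  ring

theorem dotProduct_lapMatrix_mulVec_ite_mem [Field R] [CharZero R] (S : Finset V) (a b : R) :
    (fun x => if x ∈ S then a else b) ⬝ᵥ G.lapMatrix R *ᵥ (fun x => if x ∈ S then a else b) =
      #(G.interedges S Sᶜ) * (a - b) ^ 2 := by
  rw [← toLinearMap₂'_apply', lapMatrix_toLinearMap₂', sum_sum_ite_adj_ite_mem_sub_sq,
    mul_div_cancel_left₀ _ two_ne_zero]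

theorem mul_card_mul_card_compl_le_card_mul_card_interedges {γ : ℝ}
    (hγ : ∀ (μ : ℝ) (v : V → ℝ), v ≠ 0 → ∑ x, v x = 0 → G.lapMatrix ℝ *ᵥ v = μ • v → γ ≤ μ)
    (S : Finset V) :
    γ * (#S * #Sᶜ) ≤ Fintype.card V * #(G.interedges S Sᶜ) := by
  rcases isEmpty_or_nonempty V with hV | hV
  · simp [Subsingleton.elim S ∅]
  let w : V → ℝ := fun x => if x ∈ S then (#Sᶜ : ℝ) else -#S
  have card_add : (#S + #Sᶜ : ℝ) = Fintype.card V := mod_cast S.card_add_card_compl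
  have card_pos : (0 : ℝ) < Fintype.card V := mod_cast Fintype.card_pos
  have w_sum : 1 ⬝ᵥ w = 0 := by
    rw [one_dotProduct, sum_ite_mem_const]
    ring
  have w_sq : w ⬝ᵥ w = Fintype.card V * (#S * #Sᶜ) := by
    simp only [w, dotProduct, ite_mul_ite]
    rw [sum_ite_mem_const, ← card_add]
    ring
  have w_form :
      w ⬝ᵥ G.lapMatrix ℝ *ᵥ w = Fintype.card V * (Fintype.card V * #(G.interedges S Sᶜ)) := by
    rw [dotProduct_lapMatrix_mulVec_ite_mem, sub_neg_eq_add, add_comm, card_add]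
    ring
  have rayleigh : γ * (w ⬝ᵥ w) ≤ w ⬝ᵥ G.lapMatrix ℝ *ᵥ w :=
    mul_dotProduct_self_le_dotProduct_mulVec (u := 1) (c := 0) (G.isHermitian_lapMatrix ℝ)
      (by rw [zero_smul]; exact G.lapMatrix_mulVec_const_eq_zero)
      (fun μ v hv hsum => hγ μ v hv (by rwa [one_dotProduct] at hsum)) w_sum
  rw [w_sq, w_form, mul_left_comm] at rayleigh
  exact le_of_mul_le_mul_left rayleigh card_pos

theorem lapMatrix_mulVec_of_isRegularOfDegree [NonAssocRing R] {d : ℕ}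
    (hd : G.IsRegularOfDegree d) (v : V → R) :
    G.lapMatrix R *ᵥ v = (d : R) • v - G.adjMatrix R *ᵥ v := by
  ext x
  rw [lapMatrix_mulVec_apply, hd.degree_eq x, Pi.sub_apply, adjMatrix_mulVec_apply, Pi.smul_apply,
    smul_eq_mul]

theorem sub_le_lapMatrix_eigenvalue_of_isRegularOfDegree {d : ℕ}
    (hd : G.IsRegularOfDegree d) {lam : ℝ}
    (hlam : ∀ (μ : ℝ) (v : V → ℝ), v ≠ 0 → ∑ x, v x = 0 → G.adjMatrix ℝ *ᵥ v = μ • v → μ ≤ lam)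
    (μ : ℝ) (v : V → ℝ) (hv : v ≠ 0) (hsum : ∑ x, v x = 0) (hμ : G.lapMatrix ℝ *ᵥ v = μ • v) :
    d - lam ≤ μ := by
  rw [lapMatrix_mulVec_of_isRegularOfDegree G hd] at hμ
  refine sub_le_comm.1 (hlam (d - μ) v hv hsum ?_)
  rw [sub_smul, ← hμ, sub_sub_cancel]

end Cut

open Finset Matrix in
theorem stmt_18_general {V : Type*} [Fintype V] [DecidableEq V] (G : SimpleGraph V)
    [DecidableRel G.Adj] {γ : ℝ}
    (hγ : ∀ (μ : ℝ) (v : V → ℝ), v ≠ 0 → ∑ x, v x = 0 → G.lapMatrix ℝ *ᵥ v = μ • v → γ ≤ μ)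
    {S : Finset V} (hS : S.Nonempty) (hS2 : 2 * #S ≤ Fintype.card V) :
    γ / 2 ≤ (∑ x ∈ S, ∑ y ∈ Sᶜ, if G.Adj x y then (1 : ℝ) else 0) / (#S : ℝ) := by
  rw [sum_sum_ite_adj_const, mul_one]
  have card_S_pos : (0 : ℝ) < #S := mod_cast hS.card_pos
  rcases lt_or_ge γ 0 with hneg | hnonneg
  · exact (by linarith : γ / 2 ≤ 0).trans (by positivity)
  have card_pos : (0 : ℝ) < Fintype.card V := mod_cast (by have := hS.card_pos; lia)
  have half_le : (Fintype.card V : ℝ) ≤ 2 * #Sᶜ := mod_cast (by have := S.card_add_card_compl; lia)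
  rw [le_div_iff₀ card_S_pos]
  refine le_of_mul_le_mul_left ?_ card_pos
  calc (Fintype.card V : ℝ) * (γ / 2 * #S) = γ * #S * Fintype.card V / 2 := by ring
    _ ≤ γ * #S * (2 * #Sᶜ) / 2 := by gcongr
    _ = γ * (#S * #Sᶜ) := by ring
    _ ≤ Fintype.card V * #(G.interedges S Sᶜ) :=
      mul_card_mul_card_compl_le_card_mul_card_interedges G hγ S

open SimpleGraph in
/-- Cheeger inequality, easy direction: For a d-regular graph G with lam2 an
upper bound for every adjacency eigenvalue possessing a mean-zero eigenvector (in particular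
lam2 ≥ λ₂(G)), every nonempty S with |S| ≤ n/2 satisfies e(S, V∖S)/|S| ≥ (d − λ₂)/2; i.e.
the Cheeger constant h(G) satisfies h(G) ≥ (d − λ₂(G))/2. -/
theorem stmt_18 {V : Type*} [Fintype V] [DecidableEq V] (G : SimpleGraph V)
    [DecidableRel G.Adj] (d : ℕ) (hd : G.IsRegularOfDegree d) (lam2 : ℝ)
    (hlam2 : ∀ (μ : ℝ) (v : V → ℝ), v ≠ 0 → (∑ x, v x) = 0 →
      (adjMatrix ℝ G).mulVec v = μ • v → μ ≤ lam2)
    (S : Finset V) (hS : S.Nonempty) (hS2 : 2 * S.card ≤ Fintype.card V) :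
    ((d : ℝ) - lam2) / 2
      ≤ (∑ x ∈ S, ∑ y ∈ Sᶜ, if G.Adj x y then (1 : ℝ) else 0) / (S.card : ℝ) :=
  stmt_18_general G (sub_le_lapMatrix_eigenvalue_of_isRegularOfDegree G hd hlam2) hS hS2
end
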